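/- arXiv:1610.03624 — 2 statements merged into one kernel-verified Lean document; each statement's English description precedes it below -/
import Mathlib

section
/- For all real β > 0, m > 0 and x ∈ ℝ, the absolutely convergent integral ∫_ℝ exp(i·p·x)·exp(-β·√(p² + m²)) dp equals 2·β·m·K₁(m·√(β² + x²)) / √(β² + x²). -/
open MeasureTheory Real Set Complex

/-- The modified Bessel function of the second kind (MacDonald function),
`K_ν(z) = ∫₀^∞ exp(-z cosh t) cosh(ν t) dt`. -/
noncomputable def besselK (ν z : ℝ) : ℝ :=
  ∫ t in Set.Ioi (0 : ℝ), Real.exp (-z * Real.cosh t) * Real.cosh (ν * t)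

lemma aux_cosh_lb (u : ℝ) : 1 + u ^ 2 / 2 ≤ Real.cosh u := by
  have h := Real.cosh_sq' (u/2)
  have h2 : Real.cosh u = 1 + 2 * Real.sinh (u/2)^2 := by
    have := Real.cosh_two_mul (u/2)
    rw [show 2 * (u/2) = u by ring] at this
    rw [this, h]; ring
  rw [h2]
  have h3 : |u/2| ≤ |Real.sinh (u/2)| := by
    rw [Real.abs_sinh]
    exact Real.self_le_sinh_iff.2 (abs_nonneg _)
  have := sq_le_sq.2 h3
  nlinarith

lemma aux_integrable_two (a : ℝ) (ha : 0 < a) :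
    Integrable (fun u : ℝ => Real.exp (-a * Real.cosh u) * Real.cosh u ^ 2) := by
  have hg : Integrable (fun u : ℝ => (8 / a ^ 2) * Real.exp (-(a/4) * u ^ 2)) :=
    (integrable_exp_neg_mul_sq (by positivity)).const_mul _
  refine hg.mono' (by fun_prop) (Filter.Eventually.of_forall fun u => ?_)
  rw [Real.norm_of_nonneg (by positivity)]
  have hc := Real.cosh_pos u
  have h1 := Real.quadratic_le_exp_of_nonneg (x := a/2 * Real.cosh u) (by positivity)
  have h2 : Real.cosh u ^ 2 ≤ (8 / a ^ 2) * Real.exp (a/2 * Real.cosh u) := by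
    rw [div_mul_eq_mul_div, le_div_iff₀ (by positivity)]
    nlinarith [mul_pos ha hc]
  calc Real.exp (-a * Real.cosh u) * Real.cosh u ^ 2
      ≤ Real.exp (-a * Real.cosh u) * ((8 / a ^ 2) * Real.exp (a/2 * Real.cosh u)) := by gcongr
    _ = (8 / a ^ 2) * Real.exp (-a/2 * Real.cosh u) := by
        rw [mul_left_comm, ← Real.exp_add]; ring_nf
    _ ≤ _ := by
        refine mul_le_mul_of_nonneg_left (Real.exp_le_exp.2 ?_) (by positivity)
        nlinarith [aux_cosh_lb u]

lemma aux_integrable_one (a : ℝ) (ha : 0 < a) :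
    Integrable (fun u : ℝ => Real.exp (-a * Real.cosh u) * Real.cosh u) := by
  refine (aux_integrable_two a ha).mono' (by fun_prop) (Filter.Eventually.of_forall fun u => ?_)
  have hc := Real.one_le_cosh u
  rw [Real.norm_of_nonneg (by positivity)]
  gcongr
  nlinarith

lemma aux_norm_cosh (u φ : ℝ) : ‖Complex.cosh (u - φ * Complex.I)‖ ≤ Real.cosh u := by
  rw [Complex.cosh, norm_div, Real.cosh_eq, Complex.norm_two]
  gcongr
  refine (norm_add_le _ _).trans (le_of_eq ?_)
  simp [Complex.norm_exp]

lemma aux_norm_sinh (u φ : ℝ) : ‖Complex.sinh (u - φ * Complex.I)‖ ≤ Real.cosh u := by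
  rw [Complex.sinh, norm_div, Real.cosh_eq, Complex.norm_two]
  gcongr
  refine (norm_sub_le _ _).trans (le_of_eq ?_)
  simp [Complex.norm_exp]

lemma aux_cosh_eq (u φ : ℝ) : Complex.cosh (u - φ * Complex.I) =
    ((Real.cosh u * Real.cos φ : ℝ) : ℂ) - ((Real.sinh u * Real.sin φ : ℝ) : ℂ) * Complex.I := by
  rw [Complex.cosh_sub, Complex.cosh_mul_I, Complex.sinh_mul_I]
  push_cast; ring

lemma aux_norm_exp (z u φ : ℝ) : ‖Complex.exp (-z * Complex.cosh (u - φ * Complex.I))‖ =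
    Real.exp (-(z * Real.cos φ) * Real.cosh u) := by
  rw [Complex.norm_exp, aux_cosh_eq, ← Complex.ofReal_neg, Complex.re_ofReal_mul]
  congr 1
  rw [Complex.sub_re, Complex.ofReal_re, Complex.re_ofReal_mul, Complex.I_re]
  ring

lemma aux_int_cosh (z φ : ℝ) (h : 0 < z * Real.cos φ) : Integrable (fun u : ℝ =>
    Complex.exp (-z * Complex.cosh (u - φ * Complex.I)) * Complex.cosh (u - φ * Complex.I)) := by
  refine (aux_integrable_one _ h).mono' (by fun_prop) (Filter.Eventually.of_forall fun u => ?_)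
  rw [norm_mul, aux_norm_exp]
  gcongr
  exact aux_norm_cosh u φ

lemma aux_int_sinh (z φ : ℝ) (h : 0 < z * Real.cos φ) : Integrable (fun u : ℝ =>
    Complex.exp (-z * Complex.cosh (u - φ * Complex.I)) * Complex.sinh (u - φ * Complex.I)) := by
  refine (aux_integrable_one _ h).mono' (by fun_prop) (Filter.Eventually.of_forall fun u => ?_)
  rw [norm_mul, aux_norm_exp]
  gcongr
  exact aux_norm_sinh u φ

lemma aux_int_exp (z φ : ℝ) (h : 0 < z * Real.cos φ) : Integrable (fun u : ℝ =>
    Complex.exp (-z * Complex.cosh (u - φ * Complex.I))) := by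
  refine (aux_integrable_one _ h).mono' (by fun_prop) (Filter.Eventually.of_forall fun u => ?_)
  rw [aux_norm_exp]
  exact le_mul_of_one_le_right (by positivity) (Real.one_le_cosh u)

/-- Complex derivative of the integrand, up to sign. -/
noncomputable def auxD (z : ℝ) (w : ℂ) : ℂ :=
  Complex.exp (-z * Complex.cosh w) * (-z * Complex.sinh w) * Complex.cosh w +
    Complex.exp (-z * Complex.cosh w) * Complex.sinh w

lemma aux_hasDeriv (z : ℝ) (w : ℂ) :
    HasDerivAt (fun w => Complex.exp (-z * Complex.cosh w) * Complex.cosh w) (auxD z w) w :=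
  (((Complex.hasDerivAt_cosh w).const_mul (-z : ℂ)).cexp).mul (Complex.hasDerivAt_cosh w)

lemma aux_hasDeriv_u (u φ : ℝ) :
    HasDerivAt (fun u : ℝ => (u - φ * Complex.I : ℂ)) 1 u :=
  (Complex.ofRealCLM.hasDerivAt (x := u)).sub_const _

lemma aux_hasDeriv_phi (u φ : ℝ) :
    HasDerivAt (fun φ : ℝ => (u - φ * Complex.I : ℂ)) (-Complex.I) φ := by
  have := ((Complex.ofRealCLM.hasDerivAt (x := φ)).mul_const Complex.I).const_sub (u : ℂ)
  simpa using this

lemma aux_norm_D (z c u φ : ℝ) (hz : 0 < z) (h : c ≤ z * Real.cos φ) :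
    ‖auxD z (u - φ * Complex.I)‖ ≤ (z + 1) * (Real.exp (-c * Real.cosh u) * Real.cosh u ^ 2) := by
  have hc := Real.one_le_cosh u
  have he : Real.exp (-(z * Real.cos φ) * Real.cosh u) ≤ Real.exp (-c * Real.cosh u) := by
    gcongr
  rw [auxD]
  refine (norm_add_le _ _).trans ?_
  simp only [norm_mul, aux_norm_exp, norm_neg, Complex.norm_real, Real.norm_of_nonneg hz.le]
  calc _ ≤ Real.exp (-c * Real.cosh u) * (z * Real.cosh u) * Real.cosh u +
        Real.exp (-c * Real.cosh u) * Real.cosh u := by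
        gcongr
        exacts [aux_norm_sinh u φ, aux_norm_cosh u φ, aux_norm_sinh u φ]
    _ ≤ Real.exp (-c * Real.cosh u) * (z * Real.cosh u) * Real.cosh u +
        Real.exp (-c * Real.cosh u) * Real.cosh u ^ 2 := by
        gcongr
        nlinarith
    _ = _ := by ring

lemma aux_cont_D (z φ : ℝ) : Continuous (fun u : ℝ => auxD z (u - φ * Complex.I)) := by
  unfold auxD; fun_prop

lemma aux_int_D_zero (z φ : ℝ) (hz : 0 < z) (h : 0 < Real.cos φ) :
    ∫ u : ℝ, auxD z (u - φ * Complex.I) = 0 := by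
  have hzc := mul_pos hz h
  refine integral_eq_zero_of_hasDerivAt_of_integrable (fun u => ?_) ?_ (aux_int_cosh z φ hzc)
  · have := (aux_hasDeriv z (u - φ * Complex.I)).comp u (aux_hasDeriv_u u φ)
    simpa [Function.comp_def] using this
  · refine ((aux_integrable_two _ hzc).const_mul (z+1)).mono'
      (aux_cont_D z φ).aestronglyMeasurable (Filter.Eventually.of_forall fun u => ?_)
    exact aux_norm_D z _ u φ hz le_rfl

lemma aux_sinh_zero (z φ : ℝ) (hz : 0 < z) (h : 0 < Real.cos φ) :
    ∫ u : ℝ, Complex.exp (-z * Complex.cosh (u - φ * Complex.I)) *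
      Complex.sinh (u - φ * Complex.I) = 0 := by
  have hzc := mul_pos hz h
  have key : ∫ u : ℝ, (-z : ℂ) * (Complex.exp (-z * Complex.cosh (u - φ * Complex.I)) *
      Complex.sinh (u - φ * Complex.I)) = 0 := by
    refine integral_eq_zero_of_hasDerivAt_of_integrable (fun u => ?_)
      ((aux_int_sinh z φ hzc).const_mul _) (aux_int_exp z φ hzc)
    have := HasDerivAt.comp (h₂ := fun w : ℂ => Complex.exp (-z * Complex.cosh w)) u
      (((Complex.hasDerivAt_cosh (u - φ * Complex.I)).const_mul (-z : ℂ)).cexp)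
      (aux_hasDeriv_u u φ)
    refine this.congr_deriv ?_
    ring
  rw [integral_const_mul] at key
  have hz' : (-z : ℂ) ≠ 0 := by simpa using hz.ne'
  exact (mul_eq_zero.1 key).resolve_left hz'

lemma aux_G_deriv (z φ : ℝ) (hz : 0 < z) (h : φ ∈ Ioo (-(π/2)) (π/2)) :
    HasDerivAt (fun φ : ℝ => ∫ u : ℝ, Complex.exp (-z * Complex.cosh (u - φ * Complex.I)) *
      Complex.cosh (u - φ * Complex.I)) 0 φ := by
  have hc : 0 < Real.cos φ := Real.cos_pos_of_mem_Ioo h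
  have hs : {ψ : ℝ | Real.cos φ / 2 < Real.cos ψ} ∈ nhds φ :=
    (isOpen_lt continuous_const Real.continuous_cos).mem_nhds (by simp; linarith)
  have key := hasDerivAt_integral_of_dominated_loc_of_deriv_le (μ := volume) (𝕜 := ℝ)
    (F := fun (φ u : ℝ) => Complex.exp (-z * Complex.cosh (u - φ * Complex.I)) *
      Complex.cosh (u - φ * Complex.I))
    (F' := fun (φ u : ℝ) => auxD z (u - φ * Complex.I) * (-Complex.I))
    (x₀ := φ) (s := {ψ : ℝ | Real.cos φ / 2 < Real.cos ψ})
    (bound := fun u => (z + 1) * (Real.exp (-(z * (Real.cos φ / 2)) * Real.cosh u)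
      * Real.cosh u ^ 2)) hs
    (Filter.Eventually.of_forall fun ψ => by fun_prop)
    (aux_int_cosh z φ (mul_pos hz hc))
    ((aux_cont_D z φ).mul continuous_const).aestronglyMeasurable
    (Filter.Eventually.of_forall fun u ψ hψ => by
      rw [norm_mul, norm_neg, Complex.norm_I, mul_one]
      refine aux_norm_D z _ u ψ hz ?_
      have : Real.cos φ / 2 < Real.cos ψ := hψ
      gcongr)
    ((aux_integrable_two _ (by positivity)).const_mul _)
    (Filter.Eventually.of_forall fun u ψ _ =>
      HasDerivAt.comp (h₂ := fun w : ℂ => Complex.exp (-z * Complex.cosh w) * Complex.cosh w) ψ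
        (aux_hasDeriv z (u - ψ * Complex.I)) (aux_hasDeriv_phi u ψ))
  have := key.2
  rwa [integral_mul_const, aux_int_D_zero z φ hz hc, zero_mul] at this

lemma aux_bessel (z : ℝ) : ∫ u : ℝ, Real.exp (-z * Real.cosh u) * Real.cosh u
    = 2 * besselK 1 z := by
  have := integral_comp_abs (f := fun u => Real.exp (-z * Real.cosh u) * Real.cosh (1 * u))
  simp only [one_mul, Real.cosh_abs] at this
  simp only [besselK, one_mul]
  exact this

lemma aux_G (z φ : ℝ) (hz : 0 < z) (h : φ ∈ Ioo (-(π/2)) (π/2)) :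
    ∫ u : ℝ, Complex.exp (-z * Complex.cosh (u - φ * Complex.I)) *
      Complex.cosh (u - φ * Complex.I) = ((2 * besselK 1 z : ℝ) : ℂ) := by
  have h0 : (0:ℝ) ∈ Ioo (-(π/2)) (π/2) := by
    constructor <;> linarith [Real.pi_pos]
  have := isOpen_Ioo.is_const_of_deriv_eq_zero isPreconnected_Ioo
    (fun ψ hψ => (aux_G_deriv z ψ hz hψ).differentiableAt.differentiableWithinAt)
    (fun ψ hψ => (aux_G_deriv z ψ hz hψ).deriv) h h0
  rw [this, ← aux_bessel, ← integral_complex_ofReal]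
  congr 1
  ext u
  simp

lemma aux_F (z φ : ℝ) (hz : 0 < z) (h : φ ∈ Ioo (-(π/2)) (π/2)) :
    ∫ u : ℝ, Complex.exp (-z * Complex.cosh (u - φ * Complex.I)) * Complex.cosh u
      = ((Real.cos φ * (2 * besselK 1 z) : ℝ) : ℂ) := by
  have hc := mul_pos hz (Real.cos_pos_of_mem_Ioo h)
  have e : ∀ u : ℝ, Complex.exp (-z * Complex.cosh (u - φ * Complex.I)) * Complex.cosh u =
      Complex.cos φ * (Complex.exp (-z * Complex.cosh (u - φ * Complex.I)) *
        Complex.cosh (u - φ * Complex.I)) + Complex.I * Complex.sin φ *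
        (Complex.exp (-z * Complex.cosh (u - φ * Complex.I)) *
        Complex.sinh (u - φ * Complex.I)) := by
    intro u
    have : Complex.cosh u = Complex.cosh ((u - φ * Complex.I) + φ * Complex.I) := by
      congr 1; ring
    rw [this, Complex.cosh_add, Complex.cosh_mul_I, Complex.sinh_mul_I]
    ring
  simp_rw [e]
  rw [integral_add ((aux_int_cosh z φ hc).const_mul _) ((aux_int_sinh z φ hc).const_mul _),
    integral_const_mul, integral_const_mul, aux_G z φ hz h,
    aux_sinh_zero z φ hz (Real.cos_pos_of_mem_Ioo h)]
  push_cast; ring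

/-- The regularized (1+1)-dimensional Fourier integral of the square-root Green function:
for `β > 0`, `m > 0`, `x ∈ ℝ`,
`∫_ℝ exp(i p x) exp(-β √(p² + m²)) dp = 2 β m K₁(m √(β² + x²)) / √(β² + x²)`. -/
theorem fourier_integral_exp_sqrt_one_dim (β m x : ℝ) (hβ : 0 < β) (hm : 0 < m) :
    Integrable (fun p : ℝ =>
        Complex.exp (Complex.I * p * x) * Real.exp (-β * Real.sqrt (p ^ 2 + m ^ 2))) volume ∧
    ∫ p : ℝ, Complex.exp (Complex.I * p * x) * Real.exp (-β * Real.sqrt (p ^ 2 + m ^ 2))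
      = ((2 * β * m * besselK 1 (m * Real.sqrt (β ^ 2 + x ^ 2))
          / Real.sqrt (β ^ 2 + x ^ 2) : ℝ) : ℂ) := by
  set r := Real.sqrt (β ^ 2 + x ^ 2) with hr
  have hr0 : 0 < r := Real.sqrt_pos.2 (by positivity)
  set φ := Complex.arg (⟨β, x⟩ : ℂ) with hφ
  have hn : ‖(⟨β, x⟩ : ℂ)‖ = r := by
    rw [Complex.norm_eq_sqrt_sq_add_sq]
  have hcos : r * Real.cos φ = β := by
    rw [← hn]; exact Complex.norm_mul_cos_arg _
  have hsin : r * Real.sin φ = x := by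
    rw [← hn]; exact Complex.norm_mul_sin_arg _
  have hmem : φ ∈ Ioo (-(π/2)) (π/2) := by
    have : |φ| < π / 2 := Complex.abs_arg_lt_pi_div_two_iff.2 (Or.inl hβ)
    exact abs_lt.1 this
  have hz : 0 < m * r := mul_pos hm hr0
  set f : ℝ → ℂ := fun p : ℝ =>
        Complex.exp (Complex.I * p * x) * Real.exp (-β * Real.sqrt (p ^ 2 + m ^ 2)) with hf
  have hd : ∀ u ∈ (univ : Set ℝ),
      HasDerivWithinAt (fun u => m * Real.sinh u) (m * Real.cosh u) univ u :=
    fun u _ => ((Real.hasDerivAt_sinh u).const_mul m).hasDerivWithinAt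
  have hinj : InjOn (fun u => m * Real.sinh u) univ := by
    intro a _ b _ hab
    exact Real.sinh_injective (mul_left_cancel₀ hm.ne' hab)
  have himg : (fun u => m * Real.sinh u) '' univ = univ := by
    rw [image_univ, range_eq_univ]
    intro p
    obtain ⟨u, hu⟩ := Real.sinh_surjective (p / m)
    exact ⟨u, by simp only [hu]; field_simp⟩
  have hcomp : ∀ u : ℝ, |m * Real.cosh u| • f (m * Real.sinh u) =
      m * (Complex.exp (-(m * r : ℝ) * Complex.cosh (u - φ * Complex.I)) * Complex.cosh u) := by
    intro u
    have hs : Real.sqrt ((m * Real.sinh u) ^ 2 + m ^ 2) = m * Real.cosh u := by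
      rw [← Real.sqrt_sq (show 0 ≤ m * Real.cosh u by positivity)]
      congr 1
      rw [mul_pow m (Real.cosh u), Real.cosh_sq]; ring
    have hexp : f (m * Real.sinh u) =
        Complex.exp (-(m * r : ℝ) * Complex.cosh (u - φ * Complex.I)) := by
      simp only [hf]
      rw [hs, Complex.ofReal_exp, ← Complex.exp_add, aux_cosh_eq]
      congr 1
      rw [← hcos, ← hsin]
      push_cast
      ring
    rw [hexp, abs_of_pos (by positivity), Complex.real_smul]
    push_cast; ring
  have hint : Integrable (fun u : ℝ =>
      Complex.exp (-(m * r : ℝ) * Complex.cosh (u - φ * Complex.I)) * Complex.cosh u) := by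
    have hc := mul_pos hz (Real.cos_pos_of_mem_Ioo hmem)
    refine (aux_integrable_one _ hc).mono' (by fun_prop) (Filter.Eventually.of_forall fun u => ?_)
    rw [norm_mul, aux_norm_exp, ← Complex.ofReal_cosh, Complex.norm_real,
      Real.norm_of_nonneg (by positivity)]
  constructor
  · have := (integrableOn_image_iff_integrableOn_abs_deriv_smul MeasurableSet.univ hd hinj f).2
    rw [himg, integrableOn_univ, integrableOn_univ] at this
    apply this
    simp_rw [hcomp]
    exact hint.const_mul _
  · have := integral_image_eq_integral_abs_deriv_smul MeasurableSet.univ hd hinj f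
    rw [himg, setIntegral_univ, setIntegral_univ] at this
    rw [this]
    simp_rw [hcomp]
    rw [integral_const_mul, aux_F _ _ hz hmem, ← Complex.ofReal_mul]
    congr 1
    rw [eq_div_iff hr0.ne', ← hcos]
    ring
end

section
/- Let N ≥ 3 be an odd integer and let β > 0, m > 0 be real. Then for every r > 0, the (N-3)-rd iterated derivative at r of the function r ↦ β·r·m²·K₂(m·√(β² + r²)) / (β² + r²) equals (-1)^((N-3)/2) · ∫₀^∞ p^(N-2)·sin(p·r)·exp(-β·√(p² + m²)) dp, the integral being absolutely convergent. -/
open MeasureTheory Real Set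

lemma aux_pow_exp (a : ℝ) (ha : 0 < a) (n : ℕ) (y : ℝ) (hy : 0 ≤ y) :
    y ^ n * Real.exp (-a * y) ≤ n.factorial / a ^ n := by
  have h := Real.pow_div_factorial_le_exp (x := a * y) (by positivity) n
  have hf : (0 : ℝ) < n.factorial := by positivity
  rw [div_le_iff₀ hf, mul_pow] at h
  rw [neg_mul, Real.exp_neg, le_div_iff₀ (by positivity), ← div_eq_mul_inv, div_mul_eq_mul_div,
    div_le_iff₀ (Real.exp_pos _)]
  linarith

lemma aux_sq_le_cosh (t : ℝ) : 1 + t ^ 2 ≤ Real.cosh t ^ 2 := by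
  have h : |t| ≤ |Real.sinh t| := by
    rw [Real.abs_sinh]; exact Real.self_le_sinh_iff.2 (abs_nonneg t)
  have := sq_le_sq.2 h
  rw [Real.cosh_sq]; linarith

lemma aux_int_cosh_s6 (a : ℝ) (ha : 0 < a) (n : ℕ) :
    Integrable (fun t : ℝ => Real.cosh t ^ n * Real.exp (-a * Real.cosh t)) := by
  refine (integrable_inv_one_add_sq.const_mul ((n+2).factorial / a ^ (n+2))).mono'
    (by fun_prop) (Filter.Eventually.of_forall fun t => ?_)
  have hc := Real.cosh_pos t
  rw [Real.norm_of_nonneg (by positivity), ← div_eq_mul_inv, le_div_iff₀ (by positivity)]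
  refine le_trans ?_ (aux_pow_exp a ha (n+2) _ hc.le)
  calc Real.cosh t ^ n * Real.exp (-a * Real.cosh t) * (1 + t ^ 2)
      ≤ Real.cosh t ^ n * Real.exp (-a * Real.cosh t) * Real.cosh t ^ 2 := by
        gcongr; exact aux_sq_le_cosh t
    _ = _ := by ring

lemma aux_int_p (β m : ℝ) (hβ : 0 < β) (n : ℕ) :
    Integrable (fun p : ℝ => |p| ^ n * Real.exp (-β * Real.sqrt (p ^ 2 + m ^ 2))) := by
  refine (integrable_inv_one_add_sq.const_mul
    (n.factorial / β ^ n + (n+2).factorial / β ^ (n+2))).mono'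
    (by fun_prop) (Filter.Eventually.of_forall fun p => ?_)
  have hy : 0 ≤ Real.sqrt (p ^ 2 + m ^ 2) := Real.sqrt_nonneg _
  have hp : |p| ≤ Real.sqrt (p ^ 2 + m ^ 2) := by
    apply Real.abs_le_sqrt; nlinarith [sq_nonneg m]
  rw [Real.norm_of_nonneg (by positivity), ← div_eq_mul_inv, le_div_iff₀ (by positivity)]
  refine le_trans ?_ (add_le_add (aux_pow_exp β hβ n _ hy) (aux_pow_exp β hβ (n+2) _ hy))
  rw [← sq_abs p] at *
  set y := Real.sqrt (|p| ^ 2 + m ^ 2)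
  calc |p| ^ n * Real.exp (-β * y) * (1 + |p| ^ 2)
      ≤ y ^ n * Real.exp (-β * y) * (1 + y ^ 2) := by gcongr
    _ = _ := by ring

lemma aux_shift (f f' : ℂ → ℂ) (hf : ∀ z, HasDerivAt f (f' z) z) (hf'c : Continuous f')
    (s : Set ℝ) (hs : IsOpen s) (hs' : IsPreconnected s) (B : ℝ → ℝ) (hB : Integrable B)
    (h1 : ∀ y ∈ s, ∀ t : ℝ, ‖f (t + y * Complex.I)‖ ≤ B t)
    (h2 : ∀ y ∈ s, ∀ t : ℝ, ‖f' (t + y * Complex.I)‖ ≤ B t)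
    {x y : ℝ} (hx : x ∈ s) (hy : y ∈ s) :
    ∫ t : ℝ, f (t + x * Complex.I) = ∫ t : ℝ, f (t + y * Complex.I) := by
  have hfc : Continuous f := continuous_iff_continuousAt.2 fun z => (hf z).continuousAt
  have i1 : ∀ y ∈ s, Integrable (fun t : ℝ => f (t + y * Complex.I)) := fun y hy =>
    hB.mono' (Continuous.aestronglyMeasurable (by fun_prop)) (Filter.Eventually.of_forall (h1 y hy))
  have i2 : ∀ y ∈ s, Integrable (fun t : ℝ => f' (t + y * Complex.I)) := fun y hy =>
    hB.mono' (Continuous.aestronglyMeasurable (by fun_prop)) (Filter.Eventually.of_forall (h2 y hy))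
  have z2 : ∀ y ∈ s, ∫ t : ℝ, f' (t + y * Complex.I) = 0 := fun y hy => by
    refine integral_eq_zero_of_hasDerivAt_of_integrable
      (f := fun t : ℝ => f (t + y * Complex.I)) (fun t => ?_) (i2 y hy) (i1 y hy)
    have h := (hf ((t : ℂ) + y * Complex.I)).comp_add_const (t : ℂ) (y * Complex.I)
    exact h.comp_ofReal
  have hd : ∀ y ∈ s, HasDerivAt (fun y : ℝ => ∫ t : ℝ, f (t + y * Complex.I)) 0 y := by
    intro y hy
    have := (hasDerivAt_integral_of_dominated_loc_of_deriv_le (μ := volume)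
      (F := fun (y : ℝ) (t : ℝ) => f (t + y * Complex.I))
      (F' := fun (y : ℝ) (t : ℝ) => f' (t + y * Complex.I) * Complex.I) (bound := B)
      (hs.mem_nhds hy)
      (Filter.Eventually.of_forall fun y => Continuous.aestronglyMeasurable (by fun_prop))
      (i1 y hy) (Continuous.aestronglyMeasurable (by fun_prop))
      (Filter.Eventually.of_forall fun t y hy => by simpa using h2 y hy t) hB
      (Filter.Eventually.of_forall fun t y hy => ?_)).2
    · rwa [integral_mul_const, z2 y hy, zero_mul] at this
    · have h0 : HasDerivAt (fun y : ℂ => (t : ℂ) + y * Complex.I) Complex.I (y : ℂ) := by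
        simpa using ((hasDerivAt_id (y : ℂ)).mul_const Complex.I).const_add (t : ℂ)
      have h := HasDerivAt.comp (y : ℂ) (hf ((t : ℂ) + y * Complex.I)) h0
      exact h.comp_ofReal
  exact hs.is_const_of_deriv_eq_zero hs' 
    (fun y hy => (hd y hy).differentiableAt.differentiableWithinAt)
    (fun y hy => (hd y hy).deriv) hx hy

lemma aux_norm_sinh_s6 (z : ℂ) : ‖Complex.sinh z‖ ≤ Real.cosh z.re := by
  rw [Complex.sinh, Real.cosh_eq, norm_div]
  have := norm_sub_le (Complex.exp z) (Complex.exp (-z))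
  simp only [Complex.norm_exp, Complex.neg_re] at this
  simp only [Complex.norm_ofNat]
  gcongr

lemma aux_norm_cosh_s6 (z : ℂ) : ‖Complex.cosh z‖ ≤ Real.cosh z.re := by
  rw [Complex.cosh, Real.cosh_eq, norm_div]
  have := norm_add_le (Complex.exp z) (Complex.exp (-z))
  simp only [Complex.norm_exp, Complex.neg_re] at this
  simp only [Complex.norm_ofNat]
  gcongr

lemma aux_cosh_two (t : ℝ) : Real.cosh (2 * t) ≤ 2 * Real.cosh t ^ 2 := by
  have := Real.cosh_two_mul t
  have := Real.cosh_sq t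
  linarith

/-- the shifted complex integral identity -/
lemma aux_complex (c φ : ℝ) (hc : 0 < c) (hφ : |φ| < π / 2) :
    ∫ t : ℝ, Complex.sinh (2 * t) * Complex.exp (-c * Complex.cosh (t - φ * Complex.I)) =
    ∫ t : ℝ, Complex.sinh (2 * (t + φ * Complex.I)) * Complex.exp (-c * Complex.cosh t) := by
  obtain ⟨ψ, h1, h2⟩ := exists_between hφ
  have hψ0 : 0 ≤ ψ := (abs_nonneg _).trans h1.le
  have hcos : 0 < Real.cos ψ := Real.cos_pos_of_mem_Ioo ⟨by linarith, h2⟩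
  set a := c * Real.cos ψ with ha
  have hapos : 0 < a := by positivity
  have key := aux_shift
    (fun z => Complex.sinh (2 * z) * Complex.exp (-c * Complex.cosh (z - φ * Complex.I)))
    (fun z => Complex.cosh (2 * z) * 2 * Complex.exp (-c * Complex.cosh (z - φ * Complex.I))
      + Complex.sinh (2 * z) * (Complex.exp (-c * Complex.cosh (z - φ * Complex.I)) *
        (-c * Complex.sinh (z - φ * Complex.I))))
    (fun z => by
      have e1 : HasDerivAt (fun z : ℂ => Complex.sinh (2 * z)) (Complex.cosh (2 * z) * 2) z := by
        have := ((hasDerivAt_id z).const_mul (2 : ℂ)).csinh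
        simpa using this
      have e2 : HasDerivAt (fun z : ℂ => Complex.exp (-c * Complex.cosh (z - φ * Complex.I)))
          (Complex.exp (-c * Complex.cosh (z - φ * Complex.I)) *
        (-c * Complex.sinh (z - φ * Complex.I))) z := by
        have := ((((hasDerivAt_id z).sub_const (φ * Complex.I)).ccosh).const_mul (-(c:ℂ))).cexp
        simpa using this
      exact e1.mul e2)
    (by fun_prop) (Metric.ball φ ψ) Metric.isOpen_ball
    (convex_ball φ ψ).isPreconnected
    (fun t => (4 + 2 * c) * (Real.cosh t ^ 3 * Real.exp (-a * Real.cosh t)))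
    ((aux_int_cosh_s6 a hapos 3).const_mul _)
  have hE : ∀ y ∈ Metric.ball φ ψ, ∀ t : ℝ,
      ‖Complex.exp (-c * Complex.cosh (t + y * Complex.I - φ * Complex.I))‖ ≤
        Real.exp (-a * Real.cosh t) := by
    intro y hy t
    rw [Complex.norm_exp]
    apply Real.exp_le_exp.2
    have e : (t + y * Complex.I - φ * Complex.I : ℂ) = (t : ℂ) + ((y - φ : ℝ) : ℂ) * Complex.I := by
      push_cast; ring
    have e2 : (-c * Complex.cosh (t + y * Complex.I - φ * Complex.I)).re =
        -(c * (Real.cosh t * Real.cos (y - φ))) := by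
      have e3 : (-c * Complex.cosh (t + y * Complex.I - φ * Complex.I) : ℂ) =
          ((-(c * (Real.cosh t * Real.cos (y - φ))) : ℝ) : ℂ) +
          ((-(c * (Real.sinh t * Real.sin (y - φ))) : ℝ) : ℂ) * Complex.I := by
        rw [e, Complex.cosh_add, Complex.cosh_mul_I, Complex.sinh_mul_I]
        push_cast
        ring
      rw [e3, Complex.add_re, Complex.ofReal_re, Complex.re_ofReal_mul, Complex.I_re, mul_zero,
        add_zero]
    rw [e2, ha]
    have hyy : |y - φ| < ψ := by simpa [Real.dist_eq] using hy
    have : Real.cos ψ ≤ Real.cos (y - φ) := by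
      rw [← Real.cos_abs (y - φ)]
      exact Real.cos_le_cos_of_nonneg_of_le_pi (abs_nonneg _) (by linarith [Real.pi_pos]) hyy.le
    have hct := Real.cosh_pos t
    have : c * (Real.cosh t * Real.cos ψ) ≤ c * (Real.cosh t * Real.cos (y - φ)) := by gcongr
    linarith
  have hS : ∀ y t : ℝ, ‖Complex.sinh (2 * (t + y * Complex.I))‖ ≤ 2 * Real.cosh t ^ 2 := by
    intro y t
    refine (aux_norm_sinh_s6 _).trans ?_
    simpa using aux_cosh_two t
  have hC : ∀ y t : ℝ, ‖Complex.cosh (2 * (t + y * Complex.I))‖ ≤ 2 * Real.cosh t ^ 2 := by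
    intro y t
    refine (aux_norm_cosh_s6 _).trans ?_
    simpa using aux_cosh_two t
  have hS1 : ∀ y t : ℝ, ‖Complex.sinh (t + y * Complex.I - φ * Complex.I)‖ ≤ Real.cosh t := by
    intro y t
    refine (aux_norm_sinh_s6 _).trans ?_
    simp
  specialize key ?_ ?_ (x := 0) (y := φ) ?_ ?_
  · intro y hy t
    rw [norm_mul]
    have h1c := Real.one_le_cosh t
    calc _ ≤ (2 * Real.cosh t ^ 2) * Real.exp (-a * Real.cosh t) :=
          mul_le_mul (hS y t) (hE y hy t) (norm_nonneg _) (by positivity)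
      _ ≤ (4 + 2 * c) * Real.cosh t ^ 3 * Real.exp (-a * Real.cosh t) := by
          gcongr
          · linarith
          · norm_num
      _ = _ := by ring
  · intro y hy t
    have h1c := Real.one_le_cosh t
    refine (norm_add_le _ _).trans ?_
    simp only [norm_mul, norm_neg, Complex.norm_ofNat, Complex.norm_real,
      Real.norm_of_nonneg hc.le]
    calc _ ≤ (2 * Real.cosh t ^ 2) * 2 * Real.exp (-a * Real.cosh t) +
          (2 * Real.cosh t ^ 2) * (Real.exp (-a * Real.cosh t) * (c * Real.cosh t)) := by
          gcongr
          · exact hC y t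
          · exact hE y hy t
          · exact hS y t
          · exact hE y hy t
          · exact hS1 y t
      _ = (4 * Real.cosh t ^ 2 + 2 * c * Real.cosh t ^ 3) * Real.exp (-a * Real.cosh t) := by ring
      _ ≤ (4 * Real.cosh t ^ 3 + 2 * c * Real.cosh t ^ 3) * Real.exp (-a * Real.cosh t) := by
          gcongr
          norm_num
      _ = _ := by ring
  · simpa [Real.dist_eq] using h1
  · simpa using (abs_nonneg _).trans_lt h1
  · simpa using key

lemma aux_K2 (β m s : ℝ) (hβ : 0 < β) (hm : 0 < m) :
    β * s * m ^ 2 * besselK 2 (m * Real.sqrt (β ^ 2 + s ^ 2)) / (β ^ 2 + s ^ 2) =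
    ∫ p in Set.Ioi (0 : ℝ),
      p ^ 1 * Real.sin (p * s) * Real.exp (-β * Real.sqrt (p ^ 2 + m ^ 2)) := by
  set w : ℂ := ⟨β, s⟩ with hw
  set φ := Complex.arg w with hφdef
  set R := Real.sqrt (β ^ 2 + s ^ 2) with hR
  have hRpos : 0 < R := by positivity
  have hR2 : R ^ 2 = β ^ 2 + s ^ 2 := Real.sq_sqrt (by positivity)
  have hnorm : ‖w‖ = R := by
    rw [Complex.norm_def, Complex.normSq_mk, hR]; congr 1; ring
  have hcos : R * Real.cos φ = β := by rw [← hnorm]; exact Complex.norm_mul_cos_arg w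
  have hsin : R * Real.sin φ = s := by rw [← hnorm]; exact Complex.norm_mul_sin_arg w
  have hφ : |φ| < π / 2 := Complex.abs_arg_lt_pi_div_two_iff.2 (Or.inl hβ)
  set c := m * R with hc
  have hcpos : 0 < c := by positivity
  have key := aux_complex c φ hcpos hφ
  have hL : ∀ t : ℝ, Complex.sinh (2 * t) * Complex.exp (-c * Complex.cosh (t - φ * Complex.I)) =
      ((Real.sinh (2 * t) * Real.exp (-(m * β) * Real.cosh t) : ℝ) : ℂ) *
        Complex.exp ((m * s * Real.sinh t : ℝ) * Complex.I) := by
    intro t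
    rw [Complex.cosh_sub, Complex.cosh_mul_I, Complex.sinh_mul_I]
    push_cast
    rw [mul_assoc, ← Complex.exp_add]
    congr 2
    rw [← hcos, ← hsin, hc]
    push_cast
    ring
  have hRt : ∀ t : ℝ,
      Complex.sinh (2 * (t + φ * Complex.I)) * Complex.exp (-c * Complex.cosh t) =
      ((Real.exp (-c * Real.cosh t) : ℝ) : ℂ) *
       (((Real.sinh (2 * t) * Real.cos (2 * φ) : ℝ) : ℂ)
        + ((Real.cosh (2 * t) * Real.sin (2 * φ) : ℝ) : ℂ) * Complex.I) := by
    intro t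
    rw [show (2 * (t + φ * Complex.I) : ℂ) = (2 * t) + (2 * φ) * Complex.I by ring,
      Complex.sinh_add, Complex.cosh_mul_I, Complex.sinh_mul_I]
    push_cast
    ring
  have hb : ∀ t : ℝ, |Real.sinh (2 * t)| ≤ 2 * Real.cosh t ^ 2 := fun t => by
    refine le_trans ?_ (aux_cosh_two t)
    rw [abs_le]
    constructor
    · have := Real.sinh_lt_cosh (-(2 * t)); simp at this; linarith
    · exact (Real.sinh_lt_cosh _).le
  have iL : Integrable fun t : ℝ =>
      Complex.sinh (2 * t) * Complex.exp (-c * Complex.cosh (t - φ * Complex.I)) := by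
    refine ((aux_int_cosh_s6 (m * β) (by positivity) 2).const_mul 2).mono'
      (Continuous.aestronglyMeasurable (by fun_prop)) (Filter.Eventually.of_forall fun t => ?_)
    rw [hL, norm_mul, Complex.norm_exp_ofReal_mul_I, Complex.norm_real, norm_mul, mul_one,
      Real.norm_eq_abs, Real.norm_of_nonneg (Real.exp_pos _).le, ← mul_assoc]
    gcongr
    exact hb t
  have iR : Integrable fun t : ℝ =>
      Complex.sinh (2 * (t + φ * Complex.I)) * Complex.exp (-c * Complex.cosh t) := by
    refine ((aux_int_cosh_s6 c hcpos 2).const_mul 2).mono'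
      (Continuous.aestronglyMeasurable (by fun_prop)) (Filter.Eventually.of_forall fun t => ?_)
    rw [norm_mul, Complex.norm_exp, ← mul_assoc]
    have e : (-(c:ℂ) * Complex.cosh t).re = -c * Real.cosh t := by
      rw [← Complex.ofReal_cosh]; simp
    rw [e]
    gcongr
    refine (aux_norm_sinh_s6 _).trans ?_
    simpa using aux_cosh_two t
  have key2 := congrArg Complex.im key
  have eL := integral_im iL
  have eR := integral_im iR
  simp only [RCLike.im_to_complex] at eL eR
  rw [← eL, ← eR] at key2
  have fL : ∀ t : ℝ, (Complex.sinh (2 * t) *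
      Complex.exp (-c * Complex.cosh (t - φ * Complex.I))).im =
      (fun t : ℝ => Real.sinh (2 * t) * Real.exp (-(m * β) * Real.cosh t) *
        Real.sin (m * s * Real.sinh t)) |t| := by
    intro t
    rw [hL, Complex.im_ofReal_mul, Complex.exp_ofReal_mul_I_im]
    rcases abs_choice t with h | h <;> rw [h]
    simp
  have fR : ∀ t : ℝ, (Complex.sinh (2 * (t + φ * Complex.I)) *
      Complex.exp (-c * Complex.cosh t)).im =
      (fun t : ℝ => Real.sin (2 * φ) * (Real.exp (-c * Real.cosh t) * Real.cosh (2 * t))) |t| := by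
    intro t
    rw [hRt, Complex.im_ofReal_mul]
    have : (((Real.sinh (2 * t) * Real.cos (2 * φ) : ℝ) : ℂ)
        + ((Real.cosh (2 * t) * Real.sin (2 * φ) : ℝ) : ℂ) * Complex.I).im =
        Real.cosh (2 * t) * Real.sin (2 * φ) := by
      rw [Complex.add_im, Complex.ofReal_im, Complex.im_ofReal_mul, Complex.I_im,
        mul_one, zero_add]
    rw [this]
    rcases abs_choice t with h | h <;> rw [h]
    · ring
    · simp; ring
  rw [integral_congr_ae (Filter.Eventually.of_forall fL),
    integral_congr_ae (Filter.Eventually.of_forall fR)] at key2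
  have q1 := integral_comp_abs (f := fun t : ℝ => Real.sinh (2 * t) *
    Real.exp (-(m * β) * Real.cosh t) * Real.sin (m * s * Real.sinh t))
  have q2 := integral_comp_abs (f := fun t : ℝ => Real.sin (2 * φ) *
    (Real.exp (-c * Real.cosh t) * Real.cosh (2 * t)))
  have key2 := q1.symm.trans (key2.trans q2)
  rw [integral_const_mul] at key2
  change _ = 2 * (Real.sin (2 * φ) * besselK 2 c) at key2
  -- substitution
  have himg : (fun t : ℝ => m * Real.sinh t) '' Ioi 0 = Ioi 0 := by
    ext p
    constructor
    · rintro ⟨t, ht, rfl⟩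
      exact mul_pos hm (Real.sinh_pos_iff.2 ht)
    · intro hp
      refine ⟨Real.arsinh (p / m), Real.arsinh_pos_iff.2 (div_pos hp hm), ?_⟩
      simp only [Real.sinh_arsinh]
      field_simp
  have hsub := integral_image_eq_integral_abs_deriv_smul (f := fun t : ℝ => m * Real.sinh t)
    (f' := fun t => m * Real.cosh t) (s := Ioi (0:ℝ)) measurableSet_Ioi
    (fun t _ => ((Real.hasDerivAt_sinh t).const_mul m).hasDerivWithinAt)
    (fun a _ b _ h => Real.sinh_injective (mul_left_cancel₀ hm.ne' h))
    (fun p => p ^ 1 * Real.sin (p * s) * Real.exp (-β * Real.sqrt (p ^ 2 + m ^ 2)))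
  rw [himg] at hsub
  rw [hsub]
  have hg : ∀ t : ℝ, |m * Real.cosh t| • ((m * Real.sinh t) ^ 1 * Real.sin (m * Real.sinh t * s) *
      Real.exp (-β * Real.sqrt ((m * Real.sinh t) ^ 2 + m ^ 2))) =
      m ^ 2 / 2 * (Real.sinh (2 * t) * Real.exp (-(m * β) * Real.cosh t) *
        Real.sin (m * s * Real.sinh t)) := by
    intro t
    have hct := Real.cosh_pos t
    have : (m * Real.sinh t) ^ 2 + m ^ 2 = (m * Real.cosh t) ^ 2 := by
      rw [mul_pow, mul_pow, Real.cosh_sq]; ring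
    rw [this, Real.sqrt_sq (by positivity), abs_of_pos (by positivity), smul_eq_mul,
      Real.sinh_two_mul, show m * Real.sinh t * s = m * s * Real.sinh t by ring,
      show -β * (m * Real.cosh t) = -(m * β) * Real.cosh t by ring]
    ring
  simp_rw [hg]
  rw [integral_const_mul]
  have k3 : ∫ t in Ioi (0:ℝ), Real.sinh (2 * t) * Real.exp (-(m * β) * Real.cosh t) *
        Real.sin (m * s * Real.sinh t) = Real.sin (2 * φ) * besselK 2 c := by linarith
  rw [k3, Real.sin_two_mul, ← hR2]
  have : β * s = R ^ 2 * (Real.sin φ * Real.cos φ) := by rw [← hcos, ← hsin]; ring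
  rw [this]
  field_simp

lemma aux_intS (β m : ℝ) (hβ : 0 < β) (n : ℕ) (g : ℝ → ℝ) (hg : Continuous g)
    (hg1 : ∀ x, |g x| ≤ 1) (s : ℝ) :
    IntegrableOn (fun p : ℝ => p ^ n * g (p * s) * Real.exp (-β * Real.sqrt (p ^ 2 + m ^ 2)))
      (Ioi 0) := by
  refine ((aux_int_p β m hβ n).mono' (Continuous.aestronglyMeasurable (by fun_prop))
    (Filter.Eventually.of_forall fun p => ?_)).integrableOn
  rw [norm_mul, norm_mul, norm_pow, Real.norm_of_nonneg (Real.exp_pos _).le,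
    Real.norm_eq_abs, Real.norm_eq_abs]
  gcongr
  exact mul_le_of_le_one_right (by positivity) (hg1 _)

lemma aux_deriv (β m : ℝ) (hβ : 0 < β) (n : ℕ) (g g' : ℝ → ℝ) (hgg : ∀ x, HasDerivAt g (g' x) x)
    (hg' : Continuous g')
    (hg1 : ∀ x, |g x| ≤ 1) (hg1' : ∀ x, |g' x| ≤ 1) (s : ℝ) :
    HasDerivAt (fun s => ∫ p in Ioi (0:ℝ), 
        p ^ n * g (p * s) * Real.exp (-β * Real.sqrt (p ^ 2 + m ^ 2)))
      (∫ p in Ioi (0:ℝ), p ^ (n+1) * g' (p * s) * Real.exp (-β * Real.sqrt (p ^ 2 + m ^ 2))) s := by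
  have hg : Continuous g := continuous_iff_continuousAt.2 fun z => (hgg z).continuousAt
  refine (hasDerivAt_integral_of_dominated_loc_of_deriv_le (μ := volume.restrict (Ioi 0))
      (F := fun (s p : ℝ) => p ^ n * g (p * s) * Real.exp (-β * Real.sqrt (p ^ 2 + m ^ 2)))
      (F' := fun (s p : ℝ) => p ^ (n+1) * g' (p * s) * Real.exp (-β * Real.sqrt (p ^ 2 + m ^ 2)))
      (bound := fun p => |p| ^ (n+1) * Real.exp (-β * Real.sqrt (p ^ 2 + m ^ 2)))
      Filter.univ_mem
      (Filter.Eventually.of_forall fun y => Continuous.aestronglyMeasurable (by fun_prop))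
      (aux_intS β m hβ n g hg hg1 s) (Continuous.aestronglyMeasurable (by fun_prop))
      (Filter.Eventually.of_forall fun p y _ => ?_) (aux_int_p β m hβ (n+1)).integrableOn
      (Filter.Eventually.of_forall fun p y _ => ?_)).2
  · rw [norm_mul, norm_mul, norm_pow, Real.norm_of_nonneg (Real.exp_pos _).le,
      Real.norm_eq_abs, Real.norm_eq_abs]
    gcongr
    exact mul_le_of_le_one_right (by positivity) (hg1' _)
  · have h0 : HasDerivAt (fun y : ℝ => p * y) p y := by
      simpa using (hasDerivAt_id y).const_mul p
    have h := HasDerivAt.comp y (hgg (p * y)) h0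
    have h2 := (h.const_mul (p ^ n)).mul_const (Real.exp (-β * Real.sqrt (p ^ 2 + m ^ 2)))
    exact h2.congr_deriv (by ring)

lemma aux_iter (β m : ℝ) (hβ : 0 < β) (k : ℕ) :
    iteratedDeriv (2 * k) (fun s => ∫ p in Ioi (0:ℝ), 
        p ^ 1 * Real.sin (p * s) * Real.exp (-β * Real.sqrt (p ^ 2 + m ^ 2))) =
    fun s => (-1) ^ k * ∫ p in Ioi (0:ℝ), 
        p ^ (2 * k + 1) * Real.sin (p * s) * Real.exp (-β * Real.sqrt (p ^ 2 + m ^ 2)) := by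
  induction k with
  | zero => simp
  | succ k ih =>
    rw [show 2 * (k + 1) = 2 * k + 1 + 1 by ring, iteratedDeriv_succ, iteratedDeriv_succ, ih]
    have d1 : deriv (fun s => (-1) ^ k * ∫ p in Ioi (0:ℝ), 
        p ^ (2 * k + 1) * Real.sin (p * s) * Real.exp (-β * Real.sqrt (p ^ 2 + m ^ 2))) =
        fun s => (-1) ^ k * ∫ p in Ioi (0:ℝ), 
        p ^ (2 * k + 1 + 1) * Real.cos (p * s) * Real.exp (-β * Real.sqrt (p ^ 2 + m ^ 2)) := by
      funext s
      exact ((aux_deriv β m hβ (2 * k + 1) Real.sin Real.cos Real.hasDerivAt_sin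
        Real.continuous_cos Real.abs_sin_le_one Real.abs_cos_le_one s).const_mul _).deriv
    rw [d1]
    funext s
    rw [((aux_deriv β m hβ (2 * k + 1 + 1) Real.cos (fun x => -Real.sin x) Real.hasDerivAt_cos
        (by fun_prop) Real.abs_cos_le_one (by simpa using Real.abs_sin_le_one) s).const_mul
        ((-1) ^ k)).deriv]
    simp only [mul_neg, neg_mul, integral_neg, pow_succ (-1 : ℝ) k, mul_one]

/-- Equation (32) of the paper: for odd `N ≥ 3`, `β > 0`, `m > 0` and `r > 0`, the
`(N-3)`-rd derivative of `r ↦ β r m² K₂(m √(β² + r²)) / (β² + r²)` equals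
`(-1)^((N-3)/2) ∫₀^∞ p^(N-2) sin(p r) exp(-β √(p² + m²)) dp`. -/
theorem iteratedDeriv_green_kernel_eq_radial_integral (N : ℕ) (hN : Odd N) (hN3 : 3 ≤ N)
    (β m : ℝ) (hβ : 0 < β) (hm : 0 < m) (r : ℝ) (hr : 0 < r) :
    IntegrableOn (fun p : ℝ =>
        p ^ (N - 2) * Real.sin (p * r) * Real.exp (-β * Real.sqrt (p ^ 2 + m ^ 2)))
      (Set.Ioi 0) volume ∧
    iteratedDeriv (N - 3)
        (fun s : ℝ => β * s * m ^ 2 * besselK 2 (m * Real.sqrt (β ^ 2 + s ^ 2)) / (β ^ 2 + s ^ 2))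
        r
      = (-1) ^ ((N - 3) / 2) * ∫ p in Set.Ioi (0 : ℝ),
          p ^ (N - 2) * Real.sin (p * r) * Real.exp (-β * Real.sqrt (p ^ 2 + m ^ 2)) := by
  refine ⟨aux_intS β m hβ (N - 2) Real.sin Real.continuous_sin Real.abs_sin_le_one r, ?_⟩
  obtain ⟨j, hj⟩ := hN
  obtain ⟨k, rfl⟩ : ∃ k, j = k + 1 := ⟨j - 1, by omega⟩
  have e1 : N - 3 = 2 * k := by omega
  have e2 : N - 2 = 2 * k + 1 := by omega
  have e3 : 2 * k / 2 = k := by omega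
  rw [funext fun s => aux_K2 β m s hβ hm, e1, e2, e3, aux_iter β m hβ k]
end
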